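/- For every real number β, the value of 3βc(2 − c) − c²(2c − 3) − 4(β − c)³ − 6(β − c)²(1 − β) at c = 3β equals β²(21 − 25β); moreover, for every β with 21/25 < β ≤ 1, there exists c with β < c < 3β such that 3βc(2 − c) − c²(2c − 3) − 4(β − c)³ − 6(β − c)²(1 − β) < 0. -/

import Mathlib

/-!
The value of `F̂(β, c)` at the pseudoeffective threshold `c = 3β` is already negative for
`β > 21/25`. That endpoint is not an admissible slope, but `F̂(β, ·)` is a polynomial, so it stays
negative for `c` slightly smaller than `3β`.
-/

open Set Topology

theorem exists_mem_Ioo_lt_of_continuousWithinAt {α γ : Type*} [LinearOrder α] [DenselyOrdered α]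
    [TopologicalSpace α] [OrderTopology α] [LinearOrder γ] [TopologicalSpace γ]
    [ClosedIciTopology γ] {f : α → γ} {a b : α} {y : γ} (hab : a < b)
    (hf : ContinuousWithinAt f (Iio b) b) (hy : f b < y) : ∃ c ∈ Ioo a b, f c < y := by
  have : (𝓝[<] b).NeBot := nhdsLT_neBot_of_exists_lt ⟨a, hab⟩
  exact (Filter.Eventually.and (Ioo_mem_nhdsLT hab) (hf.eventually_lt_const hy)).exists

/-- The generalized Futaki invariant `F̂(β, c)` of the flopped test configuration of the blow-up of
`ℙ²` at two points on a smooth cubic, with cone angle `2πβ` along the proper transform of the cubic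
and slope parameter `c`. It is encoded by the explicit polynomial of the slope computation, over any
commutative ring. -/
def flopFutaki {R : Type*} [CommRing R] (β c : R) : R :=
  3 * β * c * (2 - c) - c ^ 2 * (2 * c - 3) - 4 * (β - c) ^ 3 - 6 * (β - c) ^ 2 * (1 - β)

theorem flopFutaki_three_mul_self {R : Type*} [CommRing R] (β : R) :
    flopFutaki β (3 * β) = β ^ 2 * (21 - 25 * β) := by
  unfold flopFutaki
  ring

theorem continuous_flopFutaki {R : Type*} [CommRing R] [TopologicalSpace R] [IsTopologicalRing R]
    (β : R) : Continuous (flopFutaki β) := by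
  unfold flopFutaki
  fun_prop

theorem flopFutaki_three_mul_self_neg {K : Type*} [Field K] [LinearOrder K] [IsStrictOrderedRing K]
    {β : K} (hβ : 21 / 25 < β) : flopFutaki β (3 * β) < 0 := by
  have hβ_pos : 0 < β := by linarith
  rw [flopFutaki_three_mul_self]
  exact mul_neg_of_pos_of_neg (pow_pos hβ_pos 2) (by linarith)

theorem blowup2_flop_slope_general {K : Type*} [Field K] [LinearOrder K] [IsStrictOrderedRing K] :
    (∀ β : K, flopFutaki β (3 * β) = β ^ 2 * (21 - 25 * β)) ∧
      ∀ β : K, 21 / 25 < β → ∃ c : K, β < c ∧ c < 3 * β ∧ flopFutaki β c < 0 := by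
  refine ⟨flopFutaki_three_mul_self, fun β hβ => ?_⟩
  let _ : TopologicalSpace K := Preorder.topology K
  have : OrderTopology K := ⟨rfl⟩
  have hβ_lt : β < 3 * β := by linarith
  obtain ⟨c, ⟨hβc, hc⟩, hneg⟩ := exists_mem_Ioo_lt_of_continuousWithinAt hβ_lt
    (continuous_flopFutaki β).continuousWithinAt (flopFutaki_three_mul_self_neg hβ)
  exact ⟨c, hβc, hc, hneg⟩

/-- Flop-slope computation of Section 6.2. -/
theorem blowup2_flop_slope :
    (∀ β : ℝ, 3 * β * (3 * β) * (2 - 3 * β) - (3 * β) ^ 2 * (2 * (3 * β) - 3)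
        - 4 * (β - 3 * β) ^ 3 - 6 * (β - 3 * β) ^ 2 * (1 - β)
        = β ^ 2 * (21 - 25 * β))
    ∧ ∀ β : ℝ, 21 / 25 < β → β ≤ 1 → ∃ c : ℝ, β < c ∧ c < 3 * β ∧
        3 * β * c * (2 - c) - c ^ 2 * (2 * c - 3) - 4 * (β - c) ^ 3
          - 6 * (β - c) ^ 2 * (1 - β) < 0 := by
  have ⟨h_value, h_neg⟩ := blowup2_flop_slope_general (K := ℝ)
  exact ⟨h_value, fun β hβ _ => h_neg β hβ⟩
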